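/- (Lemma 2, first direction: the arc-eager model contains the arc-hybrid model.) Fix n ≥ 1 and any arc-hybrid parameterization (g_sh, g_rr, g_rl). Define the arc-eager parameterization f_sh = g_sh, f_ra = g_sh, f_rl = g_rl, f_re = g_rr. Then for every complete arc-hybrid transition sequence t for a sentence of length n there exists a complete arc-eager transition sequence t' for the same sentence with A(t') = A(t) and F(t') = G(t). (The sequence t' is obtained from t by replacing each sh of a token that t later attaches via rr by ra, replacing each rr by re, and keeping all other transitions in order.) -/

import Mathlib

/-- A parser configuration: a stack of indices (head of the list = top of stack),
a buffer of indices (head of the list = front of buffer), and a set of arcs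
`(h, m)` meaning `h` is the head of modifier `m`. -/
structure Config where
  stack : List ℕ
  buffer : List ℕ
  arcs : Finset (ℕ × ℕ)

/-- Initial configuration for a sentence of length `n`:
empty stack, buffer `[0, 1, …, n]` (ROOT is index 0), empty arc set. -/
def initConfig (n : ℕ) : Config := ⟨[], List.range (n + 1), ∅⟩

/-- Stack-top feature of a configuration: `none` plays the role of the dummy index ⊥
used when the stack is empty. -/
def stackFeat (c : Config) : Option ℕ := c.stack.head?

/-- Buffer-front feature of a configuration: the end-marker index `n + 1`
when the buffer is empty. -/
def bufFeat (n : ℕ) (c : Config) : ℕ := c.buffer.headD (n + 1)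

/-- Arc-eager transition labels. -/
inductive ETrans
  | sh | rl | ra | re
deriving DecidableEq

/-- Single arc-eager transitions between configurations. -/
inductive EStep : Config → ETrans → Config → Prop
  | sh (σ b β A) : EStep ⟨σ, b :: β, A⟩ .sh ⟨b :: σ, β, A⟩
  | rl (s σ b β A) (h : ∀ x, (x, s) ∉ A) :
      EStep ⟨s :: σ, b :: β, A⟩ .rl ⟨σ, b :: β, insert (b, s) A⟩
  | ra (s σ b β A) :
      EStep ⟨s :: σ, b :: β, A⟩ .ra ⟨b :: s :: σ, β, insert (s, b) A⟩
  | re (s σ β A) (h : ∃ x, (x, s) ∈ A) :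
      EStep ⟨s :: σ, β, A⟩ .re ⟨σ, β, A⟩

/-- `ETrace c t c'` holds when `t` is a list of (configuration, transition) pairs,
each transition taken in the recorded configuration, leading from `c` to `c'`. -/
inductive ETrace : Config → List (Config × ETrans) → Config → Prop
  | nil (c) : ETrace c [] c
  | cons {c c' cf : Config} {τ : ETrans} {rest} :
      EStep c τ c' → ETrace c' rest cf → ETrace c ((c, τ) :: rest) cf

/-- Score of an arc-eager transition sequence under parameterization
`(fsh, fra, frl, fre)`: the sum, over the transitions, of the corresponding
scoring function evaluated at the feature pair of the configuration in which
the transition is taken. -/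
def escore (n : ℕ) (fsh fra frl fre : Option ℕ → ℕ → ℝ)
    (t : List (Config × ETrans)) : ℝ :=
  (t.map fun e =>
    (match e.2 with
      | ETrans.sh => fsh
      | ETrans.ra => fra
      | ETrans.rl => frl
      | ETrans.re => fre) (stackFeat e.1) (bufFeat n e.1)).sum

/-- Arc-hybrid transition labels. -/
inductive HTrans
  | sh | rr | rl
deriving DecidableEq

/-- Single arc-hybrid transitions between configurations. -/
inductive HStep : Config → HTrans → Config → Prop
  | sh (σ b β A) : HStep ⟨σ, b :: β, A⟩ .sh ⟨b :: σ, β, A⟩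
  | rr (s0 s1 σ β A) :
      HStep ⟨s0 :: s1 :: σ, β, A⟩ .rr ⟨s1 :: σ, β, insert (s1, s0) A⟩
  | rl (s σ b β A) :
      HStep ⟨s :: σ, b :: β, A⟩ .rl ⟨σ, b :: β, insert (b, s) A⟩

/-- `HTrace c t c'` holds when `t` is a list of (configuration, transition) pairs,
each transition taken in the recorded configuration, leading from `c` to `c'`. -/
inductive HTrace : Config → List (Config × HTrans) → Config → Prop
  | nil (c) : HTrace c [] c
  | cons {c c' cf : Config} {τ : HTrans} {rest} :
      HStep c τ c' → HTrace c' rest cf → HTrace c ((c, τ) :: rest) cf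

/-- Score of an arc-hybrid transition sequence under parameterization
`(gsh, grr, grl)`. -/
def hscore (n : ℕ) (gsh grr grl : Option ℕ → ℕ → ℝ)
    (t : List (Config × HTrans)) : ℝ :=
  (t.map fun e =>
    (match e.2 with
      | HTrans.sh => gsh
      | HTrans.rr => grr
      | HTrans.rl => grl) (stackFeat e.1) (bufFeat n e.1)).sum

/-- Arcs already added by arc-eager for stack elements in `R`. -/
def pendArcs (R : Finset ℕ) : List ℕ → Finset (ℕ × ℕ)
  | [] => ∅
  | [_] => ∅
  | s0 :: s1 :: σ =>
    if s0 ∈ R then insert (s1, s0) (pendArcs R (s1 :: σ)) else pendArcs R (s1 :: σ)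

theorem pendArcs_congr (R R' : Finset ℕ) : ∀ σ : List ℕ,
    (∀ x ∈ σ, (x ∈ R ↔ x ∈ R')) → pendArcs R σ = pendArcs R' σ
  | [], _ => rfl
  | [_], _ => rfl
  | s0 :: s1 :: σ, h => by
    have ih := pendArcs_congr R R' (s1 :: σ) (fun x hx => h x (List.mem_cons_of_mem _ hx))
    have h0 := h s0 (by simp)
    simp only [pendArcs, ih, h0]

theorem pendArcs_mem (R : Finset ℕ) : ∀ (σ : List ℕ) (x m : ℕ),
    (x, m) ∈ pendArcs R σ → m ∈ σ
  | [], x, m, h => by simp [pendArcs] at h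
  | [_], x, m, h => by simp [pendArcs] at h
  | s0 :: s1 :: σ, x, m, h => by
    have ih := pendArcs_mem R (s1 :: σ) x m
    simp only [pendArcs] at h
    split_ifs at h with h0
    · rcases Finset.mem_insert.1 h with h | h
      · simp at h
        simp [h.2]
      · exact List.mem_cons_of_mem _ (ih h)
    · exact List.mem_cons_of_mem _ (ih h)

theorem pendArcs_cons_not_mem (R : Finset ℕ) (s : ℕ) (σ : List ℕ) (h : s ∉ R) :
    pendArcs R (s :: σ) = pendArcs R σ := by
  cases σ <;> simp [pendArcs, h]

theorem eager_sim (n : ℕ) (gsh grr grl : Option ℕ → ℕ → ℝ) (Af : Finset (ℕ × ℕ))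
    {c cf : Config} {t : List (Config × HTrans)} (ht : HTrace c t cf)
    (hcf : cf = ⟨[0], [], Af⟩)
    (hnd : (c.stack ++ c.buffer).Nodup)
    (hmod : ∀ x, ∀ m ∈ c.stack ++ c.buffer, (x, m) ∉ c.arcs) :
    ∃ (R : Finset ℕ) (t' : List (Config × ETrans)),
      ETrace ⟨c.stack, c.buffer, c.arcs ∪ pendArcs R c.stack⟩ t' ⟨[0], [], Af⟩ ∧
      escore n gsh gsh grl grr t' = hscore n gsh grr grl t := by
  induction ht with
  | nil c =>
    subst hcf
    refine ⟨∅, [], ?_, by simp [escore, hscore]⟩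
    simp only [pendArcs, Finset.union_empty]
    exact ETrace.nil _
  | cons hs _ ih =>
    specialize ih hcf
    cases hs with
    | sh σ b β A =>
      obtain ⟨R, t', h1, h2⟩ := ih
        ((List.perm_middle (l₁ := σ) (l₂ := β) (a := b)).nodup_iff.1 hnd)
        (fun x m hm => hmod x m ((List.perm_middle (l₁ := σ) (l₂ := β) (a := b)).mem_iff.2 hm))
      by_cases hb : b ∈ R
      · cases σ with
        | nil =>
          refine ⟨R, _, ETrace.cons (EStep.sh _ _ _ _) h1, ?_⟩
          simpa [escore, hscore, stackFeat, bufFeat] using h2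
        | cons s σ =>
          simp only [pendArcs, hb, if_true, Finset.union_insert] at h1
          refine ⟨R, _, ETrace.cons (EStep.ra _ _ _ _ _) h1, ?_⟩
          simpa [escore, hscore, stackFeat, bufFeat] using h2
      · simp only [pendArcs_cons_not_mem R b σ hb] at h1
        refine ⟨R, _, ETrace.cons (EStep.sh _ _ _ _) h1, ?_⟩
        simpa [escore, hscore, stackFeat, bufFeat] using h2
    | rr s0 s1 σ β A =>
      simp only [List.cons_append] at hnd hmod ih
      have hn0 := (List.nodup_cons.1 hnd).1
      obtain ⟨R, t', h1, h2⟩ := ih (List.nodup_cons.1 hnd).2 (by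
        intro x m hm hA
        rcases Finset.mem_insert.1 hA with h | h
        · simp only [Prod.mk.injEq] at h
          exact hn0 (h.2 ▸ hm)
        · exact hmod x m (List.mem_cons_of_mem _ hm) h)
      have hc : pendArcs (insert s0 R) (s1 :: σ) = pendArcs R (s1 :: σ) := by
        apply pendArcs_congr
        intro x hx
        have : x ≠ s0 := by
          rintro rfl
          apply hn0
          rw [← List.cons_append]
          exact List.mem_append_left _ hx
        simp [this]
      have he : A ∪ pendArcs (insert s0 R) (s0 :: s1 :: σ)
          = insert (s1, s0) A ∪ pendArcs R (s1 :: σ) := by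
        simp [pendArcs, hc]
      refine ⟨insert s0 R, (_, ETrans.re) :: t', ETrace.cons (EStep.re _ _ _ _ ?_) ?_, ?_⟩
      · exact ⟨s1, by simp [pendArcs]⟩
      · simp only [he]
        exact h1
      ·
        simpa [escore, hscore, stackFeat, bufFeat] using h2
    | rl s σ b β A =>
      simp only [List.cons_append] at hnd hmod ih
      have hn0 := (List.nodup_cons.1 hnd).1
      obtain ⟨R, t', h1, h2⟩ := ih (List.nodup_cons.1 hnd).2 (by
        intro x m hm hA
        rcases Finset.mem_insert.1 hA with h | h
        · simp only [Prod.mk.injEq] at h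
          exact hn0 (h.2 ▸ hm)
        · exact hmod x m (List.mem_cons_of_mem _ hm) h)
      have hsσ : s ∉ σ := fun h => hn0 (List.mem_append_left _ h)
      have hc : pendArcs (R.erase s) (s :: σ) = pendArcs R σ := by
        rw [pendArcs_cons_not_mem _ _ _ (by simp)]
        apply pendArcs_congr
        intro x hx
        have : x ≠ s := by
          rintro rfl
          exact hsσ hx
        simp [this]
      refine ⟨R.erase s, (_, ETrans.rl) :: t', ETrace.cons (EStep.rl _ _ _ _ _ ?_) ?_, ?_⟩
      · intro x hx
        simp only [hc] at hx
        rcases Finset.mem_union.1 hx with h | h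
        · exact hmod x s (by simp) h
        · exact hsσ (pendArcs_mem _ _ _ _ h)
      · simp only [hc, ← Finset.insert_union]
        exact h1
      ·
        simpa [escore, hscore, stackFeat, bufFeat] using h2

/-- **Lemma 2, first direction (arc-eager contains arc-hybrid).**
Fix `n ≥ 1` and an arc-hybrid parameterization `(gsh, grr, grl)`, and endow the
arc-eager system with `fsh = gsh`, `fra = gsh`, `frl = grl`, `fre = grr`.
Then for every complete arc-hybrid transition sequence `t` for a sentence of
length `n` there is a complete arc-eager transition sequence `t'` producing
the same arc set and with `F(t') = G(t)`. -/
theorem arc_eager_contains_arc_hybrid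
    (n : ℕ) (hn : 1 ≤ n)
    (gsh grr grl : Option ℕ → ℕ → ℝ)
    (t : List (Config × HTrans)) (A : Finset (ℕ × ℕ))
    (ht : HTrace (initConfig n) t ⟨[0], [], A⟩) :
    ∃ t' : List (Config × ETrans),
      ETrace (initConfig n) t' ⟨[0], [], A⟩ ∧
      escore n gsh gsh grl grr t' = hscore n gsh grr grl t := by
  obtain ⟨R, t', h1, h2⟩ := eager_sim n gsh grr grl A ht rfl
    (by simpa [initConfig] using List.nodup_range) (by simp [initConfig])
  refine ⟨t', ?_, h2⟩
  simpa [initConfig, pendArcs] using h1
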